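/- Let A be a bounded operator on a Hilbert space with nonnegative imaginary part, i.e., Im A := (A - A*)/(2i) ≥ 0 (a dissipative operator), and assume A + η is invertible for all real η outside a null set. Let T be a Hilbert–Schmidt operator. Then there is a universal constant C such that for all t > 0, the Lebesgue measure of { η ∈ ℝ : ‖T (η + A)⁻¹ T‖_HS > t } is at most (C/t)·‖T‖_HS². -/

import Mathlib

open MeasureTheory
open scoped ENNReal InnerProductSpace

/-- The Hilbert–Schmidt norm of an operator, computed in a Hilbert basis `b`
(valued in `ℝ≥0∞`; it is `∞` when `T` is not Hilbert–Schmidt). -/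
noncomputable def hsNorm {H : Type*} [NormedAddCommGroup H] [InnerProductSpace ℂ H]
    {ι : Type*} (b : HilbertBasis ι ℂ H) (T : H →L[ℂ] H) : ℝ≥0∞ :=
  (∑' i, (‖T (b i)‖₊ : ℝ≥0∞) ^ 2) ^ (1 / 2 : ℝ)

open Filter Topology Set InnerProductSpace
open Complex (I)
open Real (pi_pos pi_gt_three)
open scoped Real

/-!
Write `R z` for the resolvent of `L = -A`, whose imaginary part is nonpositive. Subtracting
`i T†T` from `L` makes the imaginary part at most `-T†T`, and then `‖T (R z) w‖²` is at most
`Re (i ⟪w, R z w⟫)`, a nonnegative harmonic function of `z` in the upper half-plane whose value at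
`iy` is at most `‖w‖² / y`. By its mean value property on large circles that flatten onto the real
axis, and Fatou's lemma, `∫ ‖T (R x) w‖² dx ≤ 2π ‖w‖²`; summing over `w = X (b i)`, Chebyshev's
inequality bounds the set of `x` where `‖T (R x) X‖_HS ≥ 1/2`. Off the exceptional set for `X = T†`,
the second resolvent identity compares the perturbed and unperturbed `T (R x) X` up to a factor `2`.
Rescaling the two outer operators balances the two error terms.
-/

section HalfPlane

/-- The circle of radius `r` and centre `i(r + r⁻¹)`, parametrized by arc length from its lowest
point. It lies in the upper half-plane and flattens onto the real axis as `r → ∞`, so that mean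
values over it turn into integrals over the real line. -/
noncomputable def flatteningCircle (r x : ℝ) : ℂ :=
  circleMap ((r + r⁻¹ : ℝ) * I) r (x / r - π / 2)

theorem continuous_flatteningCircle (r : ℝ) : Continuous (flatteningCircle r) :=
  (continuous_circleMap _ _).comp (by fun_prop)

theorem im_pos_of_mem_closedBall {r : ℝ} (hr : 0 < r) {z : ℂ}
    (hz : z ∈ Metric.closedBall (((r + r⁻¹ : ℝ) : ℂ) * I) r) : 0 < z.im := by
  have him : (z - ((r + r⁻¹ : ℝ) : ℂ) * I).im = z.im - (r + r⁻¹) := by simp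
  have h := (Complex.abs_im_le_norm _).trans (mem_closedBall_iff_norm.1 hz)
  rw [him, abs_le] at h
  linarith [inv_pos.2 hr]

theorem flatteningCircle_im_pos {r : ℝ} (hr : 0 < r) (x : ℝ) : 0 < (flatteningCircle r x).im :=
  im_pos_of_mem_closedBall hr (circleMap_mem_closedBall _ hr.le _)

theorem tendsto_flatteningCircle (x : ℝ) :
    Tendsto (flatteningCircle · x) atTop (𝓝 (x : ℂ)) := by
  have hbottom : circleMap 0 1 (-(π / 2)) = -I := by
    simp [circleMap, Complex.exp_neg, Complex.exp_pi_div_two_mul_I]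
  have hquotient (r : ℝ) : flatteningCircle r x =
      r • (circleMap 0 1 (-(π / 2) + r⁻¹ • x) - circleMap 0 1 (-(π / 2))) + (r⁻¹ : ℝ) * I := by
    rw [hbottom, smul_eq_mul, neg_add_eq_sub, mul_comm, ← div_eq_mul_inv, Complex.real_smul]
    simp only [flatteningCircle, circleMap]
    push_cast
    ring
  have hderiv := (hasDerivAt_circleMap 0 1 (-(π / 2))).hasFDerivAt.lim x
    (tendsto_norm_atTop_atTop.comp tendsto_id)
  have hinv : Tendsto (fun r : ℝ ↦ ((r⁻¹ : ℝ) : ℂ) * I) atTop (𝓝 0) := by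
    simpa using (Complex.continuous_ofReal.tendsto' 0 0 rfl).comp tendsto_inv_atTop_zero
      |>.mul_const I
  simpa [hquotient, hbottom] using hderiv.add hinv

theorem integral_flatteningCircle {u : ℂ → ℝ} (hu : HarmonicOnNhd u {z | 0 < z.im}) {r : ℝ}
    (hr : 0 < r) :
    ∫ x in (-(π * r))..(π * r), u (flatteningCircle r x) =
      2 * π * r * u ((r + r⁻¹ : ℝ) * I) := by
  set c : ℂ := (r + r⁻¹ : ℝ) * I
  have hball : HarmonicOnNhd u (Metric.closedBall c |r|) :=
    hu.mono fun z hz ↦ im_pos_of_mem_closedBall hr (by rwa [abs_of_pos hr] at hz)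
  have hθ (x : ℝ) : flatteningCircle r x = circleMap c r (x / r + π + -(π + π / 2)) := by
    rw [flatteningCircle]
    congr 1
    ring
  have hlower : -(π * r) / r + π = 0 := by field_simp; ring
  have hupper : π * r / r + π = 2 * π := by field_simp; ring
  simp_rw [hθ]
  rw [intervalIntegral.integral_comp_div_add
      (fun θ ↦ u (circleMap c r (θ + -(π + π / 2)))) hr.ne', hlower, hupper,
    ← hball.circleAverage_eq, Real.circleAverage_eq_integral_add (-(π + π / 2))]
  rw [smul_eq_mul, smul_eq_mul, mul_comm (2 * π) r, mul_assoc r,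
    mul_inv_cancel_left₀ Real.two_pi_pos.ne']

theorem lintegral_flatteningCircle_le {u : ℂ → ℝ} (hu : HarmonicOnNhd u {z | 0 < z.im})
    (hu₀ : ∀ z : ℂ, 0 < z.im → 0 ≤ u z) {K : ℝ} (hK : ∀ y : ℝ, 0 < y → y * u (y * I) ≤ K) {r : ℝ}
    (hr : 0 < r) :
    ∫⁻ x in Ioc (-(π * r)) (π * r), ENNReal.ofReal (u (flatteningCircle r x)) ≤
      ENNReal.ofReal (2 * π * K) := by
  have hle : -(π * r) ≤ π * r := neg_le_self (by positivity)
  have hcont : Continuous fun x ↦ u (flatteningCircle r x) :=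
    hu.continuousOn.comp_continuous (continuous_flatteningCircle r) (flatteningCircle_im_pos hr)
  have hcenter : r * u ((r + r⁻¹ : ℝ) * I) ≤ K :=
    calc r * u ((r + r⁻¹ : ℝ) * I) ≤ (r + r⁻¹) * u ((r + r⁻¹ : ℝ) * I) := by
          gcongr
          · exact hu₀ _ (by simpa using (by positivity : 0 < r + r⁻¹))
          · exact le_add_of_nonneg_right (by positivity)
      _ ≤ K := hK _ (by positivity)
  rw [← ofReal_integral_eq_lintegral_ofReal, ← intervalIntegral.integral_of_le hle,
    integral_flatteningCircle hu hr, mul_assoc]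
  · gcongr
  · exact (hcont.intervalIntegrable _ _).1
  · exact .of_forall fun x ↦ hu₀ _ (flatteningCircle_im_pos hr x)

theorem lintegral_boundary_le_of_le_harmonic {u : ℂ → ℝ} (hu : HarmonicOnNhd u {z | 0 < z.im})
    (hu₀ : ∀ z : ℂ, 0 < z.im → 0 ≤ u z) {K : ℝ} (hK : ∀ y : ℝ, 0 < y → y * u (y * I) ≤ K)
    {q : ℂ → ℝ≥0∞} (hqu : ∀ z : ℂ, 0 < z.im → q z ≤ ENNReal.ofReal (u z))
    (hq : ∀ᵐ x : ℝ, LowerSemicontinuousAt q x) :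
    ∫⁻ x : ℝ, q x ≤ ENNReal.ofReal (2 * π * K) := by
  set f : ℕ → ℝ → ℝ≥0∞ := fun n ↦ (Ioc (-(π * (n + 1))) (π * (n + 1))).indicator
    fun x ↦ ENNReal.ofReal (u (flatteningCircle (n + 1) x)) with hf
  have hr (n : ℕ) : (0 : ℝ) < n + 1 := n.cast_add_one_pos
  have hrt : Tendsto (fun n : ℕ ↦ (n + 1 : ℝ)) atTop atTop :=
    tendsto_atTop_add_const_right _ _ tendsto_natCast_atTop_atTop
  have hmeas (n : ℕ) : AEMeasurable (f n) :=
    ((hu.continuousOn.comp_continuous (continuous_flatteningCircle _)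
      (flatteningCircle_im_pos (hr n))).measurable.ennreal_ofReal.indicator
        measurableSet_Ioc).aemeasurable
  have hqf : ∀ᵐ x : ℝ, q x ≤ liminf (fun n ↦ f n x) atTop := by
    filter_upwards [hq] with x hx
    have hle : ∀ᶠ n : ℕ in atTop, q (flatteningCircle (n + 1) x) ≤ f n x := by
      filter_upwards [hrt.eventually_gt_atTop |x|] with n hn
      have hxn := abs_lt.1 (hn.trans_le (le_mul_of_one_le_left (hr n).le
        (by linarith [pi_gt_three] : 1 ≤ π)))
      rw [hf]
      simp only [indicator_of_mem (show x ∈ Ioc _ _ from ⟨hxn.1, hxn.2.le⟩)]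
      exact hqu _ (flatteningCircle_im_pos (hr n) x)
    calc q x ≤ liminf q (𝓝 x) := lowerSemicontinuousAt_iff_le_liminf.1 hx
      _ ≤ liminf (fun n : ℕ ↦ q (flatteningCircle (n + 1) x)) atTop :=
        ((tendsto_flatteningCircle x).comp hrt).liminf_le_liminf_comp
      _ ≤ liminf (fun n ↦ f n x) atTop := liminf_le_liminf hle
  calc ∫⁻ x : ℝ, q x ≤ ∫⁻ x, liminf (fun n ↦ f n x) atTop := lintegral_mono_ae hqf
    _ ≤ liminf (fun n ↦ ∫⁻ x, f n x) atTop := lintegral_liminf_le' hmeas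
    _ ≤ ENNReal.ofReal (2 * π * K) := liminf_le_of_le (by isBoundedDefault) fun b hb ↦ by
      obtain ⟨n, hn⟩ := hb.exists
      rw [lintegral_indicator measurableSet_Ioc] at hn
      exact hn.trans (lintegral_flatteningCircle_le hu hu₀ hK (hr n))

end HalfPlane

section Resolvent

variable {H F : Type*} [NormedAddCommGroup H] [InnerProductSpace ℂ H]
  [NormedAddCommGroup F] [InnerProductSpace ℂ F]

theorem im_inner_algebraMap_sub_apply (L : H →L[ℂ] H) (z : ℂ) (x : H) :
    (⟪x, (algebraMap ℂ (H →L[ℂ] H) z - L) x⟫_ℂ).im = z.im * ‖x‖ ^ 2 - (⟪x, L x⟫_ℂ).im := by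
  rw [sub_apply, ContinuousLinearMap.algebraMap_apply, inner_sub_right, inner_smul_right,
    inner_self_eq_norm_sq_to_K, Complex.sub_im, ← RCLike.ofReal_pow]
  exact congrArg (· - _) (Complex.im_mul_ofReal _ _)

theorem mem_resolventSet_of_im_pos [CompleteSpace H] {L : H →L[ℂ] H}
    (hL : ∀ x, (⟪x, L x⟫_ℂ).im ≤ 0) {z : ℂ} (hz : 0 < z.im) : z ∈ resolventSet ℂ L := by
  refine ContinuousLinearMap.isUnit_of_forall_le_norm_inner_map _ (c := ⟨z.im, hz.le⟩) hz
    fun x ↦ ?_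
  calc ‖x‖ ^ 2 * z.im ≤ (⟪x, (algebraMap ℂ (H →L[ℂ] H) z - L) x⟫_ℂ).im := by
        rw [im_inner_algebraMap_sub_apply]
        linarith [hL x]
    _ ≤ ‖⟪(algebraMap ℂ (H →L[ℂ] H) z - L) x, x⟫_ℂ‖ := by
        rw [norm_inner_symm]
        exact Complex.im_le_norm _

theorem algebraMap_sub_apply_resolvent_apply {L : H →L[ℂ] H} {z : ℂ} (hz : z ∈ resolventSet ℂ L)
    (w : H) : (algebraMap ℂ (H →L[ℂ] H) z - L) (resolvent L z w) = w :=
  DFunLike.congr_fun (Ring.mul_inverse_cancel _ hz) w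

theorem re_I_mul_inner_resolvent {L : H →L[ℂ] H} {z : ℂ} (hz : z ∈ resolventSet ℂ L) (w : H) :
    (I * ⟪w, resolvent L z w⟫_ℂ).re =
      z.im * ‖resolvent L z w‖ ^ 2 - (⟪resolvent L z w, L (resolvent L z w)⟫_ℂ).im := by
  rw [← im_inner_algebraMap_sub_apply, algebraMap_sub_apply_resolvent_apply hz,
    ← inner_conj_symm w, Complex.I_mul_re, Complex.conj_im, neg_neg]

theorem harmonicOnNhd_re_I_mul_inner_resolvent [CompleteSpace H] (L : H →L[ℂ] H) (w : H) :
    HarmonicOnNhd (fun z ↦ (I * ⟪w, resolvent L z w⟫_ℂ).re) (resolventSet ℂ L) := by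
  have hdiff : DifferentiableOn ℂ (fun z ↦ I * ⟪w, resolvent L z w⟫_ℂ) (resolventSet ℂ L) :=
    fun z hz ↦ (((innerSL ℂ w).differentiableAt.comp z
      ((spectrum.hasDerivAt_resolvent_const_left hz).differentiableAt.clm_apply
        (differentiableAt_const w))).const_mul I).differentiableWithinAt
  exact fun z hz ↦ (hdiff.analyticAt ((spectrum.isOpen_resolventSet L).mem_nhds hz)).harmonicAt_re

theorem im_mul_norm_resolvent_apply_le {L : H →L[ℂ] H} (hL : ∀ x, (⟪x, L x⟫_ℂ).im ≤ 0) {z : ℂ}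
    (hz : z ∈ resolventSet ℂ L) (w : H) : z.im * ‖resolvent L z w‖ ≤ ‖w‖ := by
  rcases (norm_nonneg (resolvent L z w)).eq_or_lt with h₀ | h₀
  · simp [← h₀]
  refine le_of_mul_le_mul_right ?_ h₀
  calc z.im * ‖resolvent L z w‖ * ‖resolvent L z w‖ ≤ (I * ⟪w, resolvent L z w⟫_ℂ).re := by
        rw [re_I_mul_inner_resolvent hz]
        linarith [hL (resolvent L z w)]
    _ ≤ ‖⟪w, resolvent L z w⟫_ℂ‖ := (Complex.re_le_norm _).trans_eq (by simp)
    _ ≤ ‖w‖ * ‖resolvent L z w‖ := norm_inner_le_norm _ _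

theorem im_mul_re_I_mul_inner_resolvent_le {L : H →L[ℂ] H} (hL : ∀ x, (⟪x, L x⟫_ℂ).im ≤ 0) {z : ℂ}
    (hz : z ∈ resolventSet ℂ L) (hz₀ : 0 ≤ z.im) (w : H) :
    z.im * (I * ⟪w, resolvent L z w⟫_ℂ).re ≤ ‖w‖ ^ 2 :=
  calc z.im * (I * ⟪w, resolvent L z w⟫_ℂ).re ≤ z.im * (‖w‖ * ‖resolvent L z w‖) := by
        gcongr
        exact (Complex.re_le_norm _).trans (by simpa using norm_inner_le_norm w _)
    _ = ‖w‖ * (z.im * ‖resolvent L z w‖) := mul_left_comm _ _ _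
    _ ≤ ‖w‖ * ‖w‖ := by gcongr; exact im_mul_norm_resolvent_apply_le hL hz w
    _ = ‖w‖ ^ 2 := (sq _).symm

theorem continuousAt_enorm_apply_resolvent_apply [CompleteSpace H] {L : H →L[ℂ] H} {z : ℂ}
    (hz : z ∈ resolventSet ℂ L) (T : H →L[ℂ] F) (w : H) :
    ContinuousAt (fun z ↦ ‖T (resolvent L z w)‖ₑ ^ 2) z :=
  ((ENNReal.continuous_pow 2).comp (T.continuous.enorm)).continuousAt.comp
    ((spectrum.hasDerivAt_resolvent_const_left hz).continuousAt.clm_apply continuousAt_const)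

/-- Kato smoothness of `T` relative to an operator with imaginary part at most `-T†T`. -/
theorem lintegral_enorm_apply_resolvent_sq_le [CompleteSpace H] {L : H →L[ℂ] H} {T : H →L[ℂ] F}
    (hLT : ∀ x, (⟪x, L x⟫_ℂ).im + ‖T x‖ ^ 2 ≤ 0)
    (hreal : ∀ᵐ x : ℝ, (x : ℂ) ∈ resolventSet ℂ L) (w : H) :
    ∫⁻ x : ℝ, ‖T (resolvent L (x : ℂ) w)‖ₑ ^ 2 ≤ ENNReal.ofReal (2 * π) * ‖w‖ₑ ^ 2 := by
  have hL (x : H) : (⟪x, L x⟫_ℂ).im ≤ 0 := by linarith [hLT x, sq_nonneg ‖T x‖]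
  have hmem {z : ℂ} (hz : 0 < z.im) : z ∈ resolventSet ℂ L := mem_resolventSet_of_im_pos hL hz
  have hle {z : ℂ} (hz : 0 < z.im) :
      ‖T (resolvent L z w)‖ ^ 2 ≤ (I * ⟪w, resolvent L z w⟫_ℂ).re := by
    rw [re_I_mul_inner_resolvent (hmem hz)]
    nlinarith [hLT (resolvent L z w), sq_nonneg ‖resolvent L z w‖]
  rw [← ofReal_norm w, ← ENNReal.ofReal_pow (norm_nonneg w), ← ENNReal.ofReal_mul (by positivity)]
  refine lintegral_boundary_le_of_le_harmonic (q := fun z ↦ ‖T (resolvent L z w)‖ₑ ^ 2)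
    ((harmonicOnNhd_re_I_mul_inner_resolvent L w).mono fun z ↦ hmem)
    (fun z hz ↦ (sq_nonneg _).trans (hle hz)) (fun y hy ↦ ?_) (fun z hz ↦ ?_)
    (hreal.mono fun x hx ↦ (continuousAt_enorm_apply_resolvent_apply hx T w).lowerSemicontinuousAt)
  · have him : ((y : ℂ) * I).im = y := by simp
    have hyI := im_mul_re_I_mul_inner_resolvent_le hL (z := y * I) (hmem (by rwa [him]))
      (by rw [him]; exact hy.le) w
    rwa [him] at hyI
  · rw [← ofReal_norm, ← ENNReal.ofReal_pow (norm_nonneg _)]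
    exact ENNReal.ofReal_le_ofReal (hle hz)

open scoped InnerProduct in
theorem mem_resolventSet_sub_I_smul_adjoint_comp [CompleteSpace H] {L : H →L[ℂ] H}
    (hL : ∀ x, (⟪x, L x⟫_ℂ).im ≤ 0) {z : ℂ} (hz : z ∈ resolventSet ℂ L) (hz₀ : 0 ≤ z.im)
    (T : H →L[ℂ] H) : z ∈ resolventSet ℂ (L - I • (T† ∘L T)) := by
  set B : H →L[ℂ] H := -(I • (resolvent L z * T†))
  have hTB : IsUnit (1 - T * B) := by
    refine ContinuousLinearMap.isUnit_of_forall_le_norm_inner_map _ one_pos fun x ↦ ?_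
    have hre : (⟪x, (1 - T * B) x⟫_ℂ).re =
        ‖x‖ ^ 2 + (I * ⟪(T†) x, resolvent L z ((T†) x)⟫_ℂ).re := by
      rw [ContinuousLinearMap.adjoint_inner_left]
      simp [B, ← Complex.ofReal_pow]
    rw [norm_inner_symm, NNReal.coe_one, mul_one]
    refine le_trans ?_ (Complex.re_le_norm _)
    rw [hre, re_I_mul_inner_resolvent hz]
    nlinarith [hL (resolvent L z ((T†) x)), sq_nonneg ‖resolvent L z ((T†) x)‖]
  have hBT : IsUnit (1 - B * T) := by
    simpa [spectrum.mem_iff, hTB] using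
      spectrum.unit_mem_mul_comm (R := ℂ) (a := T) (b := B) (r := 1)
  have hfactor : algebraMap ℂ _ z - (L - I • (T† ∘L T)) = (algebraMap ℂ _ z - L) * (1 - B * T) := by
    have hcancel : (algebraMap ℂ _ z - L) * resolvent L z = 1 := Ring.mul_inverse_cancel _ hz
    rw [mul_sub, mul_one, neg_mul, mul_neg, sub_neg_eq_add, smul_mul_assoc, mul_smul_comm,
      ← mul_assoc, ← mul_assoc, hcancel, one_mul, ← ContinuousLinearMap.mul_def, ← sub_add]
  rw [spectrum.mem_resolventSet_iff, hfactor]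
  exact hz.mul hBT

end Resolvent

section HilbertSchmidt

open scoped InnerProduct

variable {H ι : Type*} [NormedAddCommGroup H] [InnerProductSpace ℂ H] (b : HilbertBasis ι ℂ H)

theorem hsNorm_sq (T : H →L[ℂ] H) : hsNorm b T ^ 2 = ∑' i, ‖T (b i)‖ₑ ^ 2 := by
  simp only [hsNorm, ← ENNReal.rpow_natCast, ← ENNReal.rpow_mul]
  norm_num [enorm_eq_nnnorm]

theorem tsum_enorm_inner_sq (v : H) : ∑' i, ‖⟪b i, v⟫_ℂ‖ₑ ^ 2 = ‖v‖ₑ ^ 2 := by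
  have hv : ‖v‖ ^ 2 = ∑' i, ‖b.repr v i‖ ^ 2 := by
    simpa using lp.norm_rpow_eq_tsum (p := 2) (by norm_num) (b.repr v)
  have hsum : Summable fun i ↦ ‖b.repr v i‖ ^ 2 := by
    simpa using lp.memℓp (b.repr v) |>.summable (by norm_num)
  simp_rw [← b.repr_apply_apply, ← ofReal_norm, ← ENNReal.ofReal_pow (norm_nonneg _), hv]
  exact (ENNReal.ofReal_tsum_of_nonneg (fun _ ↦ sq_nonneg _) hsum).symm

theorem hsNorm_adjoint [CompleteSpace H] (T : H →L[ℂ] H) : hsNorm b (T†) = hsNorm b T := by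
  have hswap (i j : ι) : ‖⟪b j, (T†) (b i)⟫_ℂ‖ₑ = ‖⟪b i, T (b j)⟫_ℂ‖ₑ := by
    rw [ContinuousLinearMap.adjoint_inner_right, ← inner_conj_symm, RCLike.enorm_conj]
  refine (ENNReal.pow_right_strictMono two_ne_zero).injective ?_
  simp_rw [hsNorm_sq, ← tsum_enorm_inner_sq b ((T†) _), ← tsum_enorm_inner_sq b (T _), hswap]
  exact ENNReal.tsum_comm

theorem enorm_le_hsNorm [CompleteSpace H] (T : H →L[ℂ] H) : ‖T‖ₑ ≤ hsNorm b T := by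
  refine ContinuousLinearMap.opENorm_le_bound _ fun v ↦ ?_
  rw [← ENNReal.pow_le_pow_left_iff two_ne_zero, mul_pow, ← hsNorm_adjoint, hsNorm_sq,
    ← tsum_enorm_inner_sq b (T v), ← ENNReal.tsum_mul_right]
  refine ENNReal.tsum_le_tsum fun i ↦ ?_
  rw [← mul_pow, ← ContinuousLinearMap.adjoint_inner_left]
  gcongr
  simpa only [enorm_eq_nnnorm, ← ENNReal.coe_mul, ENNReal.coe_le_coe] using
    nnnorm_inner_le_nnnorm (𝕜 := ℂ) _ v

theorem hsNorm_le_mul_hsNorm {X Y : H →L[ℂ] H} {c : ℝ≥0∞}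
    (h : ∀ i, ‖X (b i)‖ₑ ≤ c * ‖Y (b i)‖ₑ) : hsNorm b X ≤ c * hsNorm b Y := by
  rw [← ENNReal.pow_le_pow_left_iff two_ne_zero, mul_pow, hsNorm_sq, hsNorm_sq,
    ← ENNReal.tsum_mul_left]
  gcongr with i
  rw [← mul_pow]
  gcongr
  exact h i

theorem hsNorm_smul (c : ℂ) (T : H →L[ℂ] H) : hsNorm b (c • T) = ‖c‖ₑ * hsNorm b T := by
  refine (ENNReal.pow_right_strictMono two_ne_zero).injective ?_
  simp only [mul_pow, hsNorm_sq, ← ENNReal.tsum_mul_left]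
  simp [enorm_smul, mul_pow]

theorem eq_zero_of_hsNorm_eq_zero [CompleteSpace H] {T : H →L[ℂ] H} (hT : hsNorm b T = 0) : T = 0 :=
  enorm_eq_zero.1 (nonpos_iff_eq_zero.1 ((enorm_le_hsNorm b T).trans_eq hT))

theorem exists_countable_forall_hsNorm_comp_sq_eq {X : H →L[ℂ] H} (hX : hsNorm b X ≠ ∞) :
    ∃ s : Set ι, s.Countable ∧
      ∀ Y : H →L[ℂ] H, hsNorm b (Y ∘L X) ^ 2 = ∑' i : s, ‖Y (X (b i))‖ₑ ^ 2 := by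
  have hsum : ∑' i, ‖X (b i)‖ₑ ^ 2 ≠ ∞ := hsNorm_sq b X ▸ ENNReal.pow_ne_top hX
  refine ⟨_, Summable.countable_support_ennreal hsum, fun Y ↦ ?_⟩
  rw [hsNorm_sq]
  refine (tsum_subtype_eq_of_support_subset (f := fun i ↦ ‖(Y ∘L X) (b i)‖ₑ ^ 2)
    fun i ↦ mt fun hi ↦ ?_).symm
  have hXi : X (b i) = 0 := by simpa using hi
  simp [hXi]

theorem measurable_enorm_apply_resolvent_apply [CompleteSpace H] (L T : H →L[ℂ] H) (w : H) :
    Measurable fun x : ℝ ↦ ‖T (resolvent L (x : ℂ) w)‖ₑ := by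
  borelize (H →L[ℂ] H)
  have hcont : Continuous fun R : H →L[ℂ] H ↦ ‖T (R w)‖ₑ := by fun_prop
  exact hcont.measurable.comp ((measurable_resolvent (a := L)).comp Complex.measurable_ofReal)

theorem sq_mul_volume_hsNorm_ge_le [CompleteSpace H] {L T : H →L[ℂ] H}
    (hLT : ∀ x, (⟪x, L x⟫_ℂ).im + ‖T x‖ ^ 2 ≤ 0)
    (hreal : ∀ᵐ x : ℝ, (x : ℂ) ∈ resolventSet ℂ L) (X : H →L[ℂ] H) (c : ℝ≥0∞) :
    c ^ 2 * volume {x : ℝ | c ≤ hsNorm b (T ∘L resolvent L (x : ℂ) ∘L X)} ≤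
      ENNReal.ofReal (2 * π) * hsNorm b X ^ 2 := by
  rcases eq_or_ne (hsNorm b X) ∞ with hX | hX
  · simp [hX, pi_pos]
  obtain ⟨s, hs, hXs⟩ := exists_countable_forall_hsNorm_comp_sq_eq b hX
  have := hs.to_subtype
  have hmeas (i : s) : Measurable fun x : ℝ ↦ ‖T (resolvent L (x : ℂ) (X (b i)))‖ₑ ^ 2 :=
    (measurable_enorm_apply_resolvent_apply L T _).pow_const 2
  have hsq (x : ℝ) : hsNorm b (T ∘L resolvent L (x : ℂ) ∘L X) ^ 2 =
      ∑' i : s, ‖T (resolvent L (x : ℂ) (X (b i)))‖ₑ ^ 2 := hXs (T ∘L resolvent L (x : ℂ))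
  simp_rw [← ENNReal.pow_le_pow_left_iff two_ne_zero (a := c), hsq]
  calc c ^ 2 * volume {x : ℝ | c ^ 2 ≤ ∑' i : s, ‖T (resolvent L (x : ℂ) (X (b i)))‖ₑ ^ 2}
      ≤ ∫⁻ x : ℝ, ∑' i : s, ‖T (resolvent L (x : ℂ) (X (b i)))‖ₑ ^ 2 :=
        mul_meas_ge_le_lintegral (.tsum hmeas) _
    _ = ∑' i : s, ∫⁻ x : ℝ, ‖T (resolvent L (x : ℂ) (X (b i)))‖ₑ ^ 2 :=
        lintegral_tsum fun i ↦ (hmeas i).aemeasurable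
    _ ≤ ∑' i : s, ENNReal.ofReal (2 * π) * ‖X (b i)‖ₑ ^ 2 := by
        gcongr
        exact lintegral_enorm_apply_resolvent_sq_le hLT hreal _
    _ = ENNReal.ofReal (2 * π) * hsNorm b X ^ 2 := by
        rw [ENNReal.tsum_mul_left]
        exact congrArg _ (hXs (.id ℂ H)).symm

end HilbertSchmidt

section WeakBound

open scoped InnerProduct NNReal

variable {H ι : Type*} [NormedAddCommGroup H] [InnerProductSpace ℂ H] (b : HilbertBasis ι ℂ H)

theorem hsNorm_le_two_mul_of_eq_add_comp {X Y Z : H →L[ℂ] H} (hZ : ‖Z‖ ≤ 1 / 2)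
    (hY : Y = X + Z ∘L Y) : hsNorm b Y ≤ 2 * hsNorm b X := by
  refine hsNorm_le_mul_hsNorm b fun i ↦ ?_
  have hle : ‖Y (b i)‖ ≤ 2 * ‖X (b i)‖ := by
    have hadd : ‖Y (b i)‖ ≤ ‖X (b i)‖ + ‖Z (Y (b i))‖ := by
      conv_lhs => rw [hY]
      exact norm_add_le _ _
    linarith [Z.le_of_opNorm_le hZ (Y (b i))]
  simp_rw [enorm_eq_nnnorm]
  exact_mod_cast hle

theorem comp_resolvent_comp_eq_add [CompleteSpace H] {L T : H →L[ℂ] H} {z : ℂ}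
    (hz : z ∈ resolventSet ℂ L) (hz' : z ∈ resolventSet ℂ (L - I • (T† ∘L T))) (X : H →L[ℂ] H) :
    T ∘L resolvent L z ∘L X = T ∘L resolvent (L - I • (T† ∘L T)) z ∘L X +
      (I • (T ∘L resolvent (L - I • (T† ∘L T)) z ∘L T†)) ∘L (T ∘L resolvent L z ∘L X) := by
  set R' := resolvent (L - I • (T† ∘L T)) z
  have hresolvent : R' - resolvent L z = R' * -(I • (T† ∘L T)) * resolvent L z := by
    rw [spectrum.resolvent_sub_resolvent hz' hz, sub_sub_cancel_left]
  ext x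
  have hx : T (R' (X x)) - T (resolvent L z (X x)) =
      -(I • T (R' ((T†) (T (resolvent L z (X x)))))) := by
    simpa using congrArg T (DFunLike.congr_fun hresolvent (X x))
  refine eq_add_of_sub_eq' ?_
  rw [← neg_sub]
  exact neg_eq_iff_eq_neg.2 hx

theorem hsNorm_comp_resolvent_comp_le [CompleteSpace H] {L T : H →L[ℂ] H} {z : ℂ}
    (hz : z ∈ resolventSet ℂ L) (hz' : z ∈ resolventSet ℂ (L - I • (T† ∘L T)))
    (hT : hsNorm b (T ∘L resolvent (L - I • (T† ∘L T)) z ∘L T†) ≤ 1 / 2) (X : H →L[ℂ] H) :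
    hsNorm b (T ∘L resolvent L z ∘L X) ≤
      2 * hsNorm b (T ∘L resolvent (L - I • (T† ∘L T)) z ∘L X) := by
  refine hsNorm_le_two_mul_of_eq_add_comp b ?_ (comp_resolvent_comp_eq_add hz hz' X)
  have hle := (enorm_le_hsNorm b _).trans hT
  rw [norm_smul, Complex.norm_I, one_mul]
  simpa using ENNReal.toReal_mono (by norm_num) hle

theorem volume_one_lt_hsNorm_le [CompleteSpace H] {L : H →L[ℂ] H}
    (hL : ∀ x, (⟪x, L x⟫_ℂ).im ≤ 0) (hreal : ∀ᵐ x : ℝ, (x : ℂ) ∈ resolventSet ℂ L)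
    (T X : H →L[ℂ] H) :
    volume {x : ℝ | 1 < hsNorm b (T ∘L resolvent L (x : ℂ) ∘L X)} ≤
      ENNReal.ofReal (8 * π) * (hsNorm b T ^ 2 + hsNorm b X ^ 2) := by
  set L' : H →L[ℂ] H := L - I • (T† ∘L T)
  have hL' (x : H) : (⟪x, L' x⟫_ℂ).im + ‖T x‖ ^ 2 ≤ 0 := by
    have him : (⟪x, L' x⟫_ℂ).im = (⟪x, L x⟫_ℂ).im - ‖T x‖ ^ 2 := by
      simp [L', ContinuousLinearMap.adjoint_inner_right, ← Complex.ofReal_pow]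
    linarith [hL x]
  have hreal' : ∀ᵐ x : ℝ, (x : ℂ) ∈ resolventSet ℂ L' := hreal.mono fun x hx ↦
    mem_resolventSet_sub_I_smul_adjoint_comp hL hx (Complex.ofReal_im x).ge T
  have hvol (Y : H →L[ℂ] H) : volume {x : ℝ | 1 / 2 ≤ hsNorm b (T ∘L resolvent L' (x : ℂ) ∘L Y)} ≤
      ENNReal.ofReal (8 * π) * hsNorm b Y ^ 2 := by
    have hfour : ENNReal.ofReal (8 * π) = 2 ^ 2 * ENNReal.ofReal (2 * π) := by
      rw [← ENNReal.ofReal_ofNat, ← ENNReal.ofReal_pow zero_le_two, ← ENNReal.ofReal_mul (by simp)]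
      congr 1
      ring
    have hchebyshev := sq_mul_volume_hsNorm_ge_le b hL' hreal' Y (1 / 2)
    rw [hfour, mul_assoc, ← ENNReal.inv_mul_le_iff (by simp) (by simp), ENNReal.inv_pow,
      ← one_div]
    exact hchebyshev
  calc volume {x : ℝ | 1 < hsNorm b (T ∘L resolvent L (x : ℂ) ∘L X)}
      ≤ volume ({x : ℝ | 1 / 2 ≤ hsNorm b (T ∘L resolvent L' (x : ℂ) ∘L T†)} ∪
          {x : ℝ | 1 / 2 ≤ hsNorm b (T ∘L resolvent L' (x : ℂ) ∘L X)}) := by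
        refine measure_mono_ae ?_
        filter_upwards [hreal, hreal'] with x hx hx' hlt
        refine or_iff_not_imp_left.2 fun hT ↦ ?_
        have hle := hsNorm_comp_resolvent_comp_le b hx hx' (not_le.1 hT).le X
        refine ENNReal.div_le_of_le_mul ?_
        rw [mul_comm]
        exact hlt.le.trans hle
    _ ≤ ENNReal.ofReal (8 * π) * hsNorm b (T†) ^ 2 + ENNReal.ofReal (8 * π) * hsNorm b X ^ 2 :=
        (measure_union_le _ _).trans (add_le_add (hvol _) (hvol _))
    _ = ENNReal.ofReal (8 * π) * (hsNorm b T ^ 2 + hsNorm b X ^ 2) := by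
        rw [hsNorm_adjoint, mul_add]

theorem volume_lt_hsNorm_le_of_mul_eq_one [CompleteSpace H] {L : H →L[ℂ] H}
    (hL : ∀ x, (⟪x, L x⟫_ℂ).im ≤ 0) (hreal : ∀ᵐ x : ℝ, (x : ℂ) ∈ resolventSet ℂ L)
    (S T : H →L[ℂ] H) {a c t : ℝ≥0} (hact : a * c * t = 1) :
    volume {x : ℝ | t < hsNorm b (S ∘L resolvent L (x : ℂ) ∘L T)} ≤
      ENNReal.ofReal (8 * π) * ((a * hsNorm b S) ^ 2 + (c * hsNorm b T) ^ 2) := by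
  have hac : ((a * c : ℝ≥0) : ℝ≥0∞) ≠ 0 := by
    exact_mod_cast left_ne_zero_of_mul_eq_one hact
  have hscale (R : H →L[ℂ] H) :
      hsNorm b (((a : ℂ) • S) ∘L R ∘L ((c : ℂ) • T)) = (a * c : ℝ≥0) * hsNorm b (S ∘L R ∘L T) := by
    have hcomp : ((a : ℂ) • S) ∘L R ∘L ((c : ℂ) • T) = ((a * c : ℝ≥0) : ℂ) • (S ∘L R ∘L T) := by
      rw [ContinuousLinearMap.comp_smul, ContinuousLinearMap.comp_smul,
        ContinuousLinearMap.smul_comp, smul_smul, mul_comm a, NNReal.coe_mul, Complex.ofReal_mul]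
    rw [hcomp, hsNorm_smul]
    simp [enorm_eq_nnnorm]
  have hbound := volume_one_lt_hsNorm_le b hL hreal ((a : ℂ) • S) ((c : ℂ) • T)
  have hone : (1 : ℝ≥0∞) = (a * c : ℝ≥0) * t := by exact_mod_cast hact.symm
  simp_rw [hscale, hone, ENNReal.mul_lt_mul_iff_right hac ENNReal.coe_ne_top] at hbound
  rw [hsNorm_smul, hsNorm_smul] at hbound
  simpa [enorm_eq_nnnorm] using hbound

theorem exists_mul_mul_eq_one_and_sq_add_sq_eq {p q t : ℝ≥0} (hp : p ≠ 0) (hq : q ≠ 0)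
    (ht : t ≠ 0) :
    ∃ a c : ℝ≥0, a * c * t = 1 ∧ (a * p) ^ 2 + (c * q) ^ 2 = 2 * (p * q) / t := by
  refine ⟨NNReal.sqrt (q / (t * p)), NNReal.sqrt (p / (t * q)), ?_, ?_⟩
  · rw [← NNReal.sqrt_mul, div_mul_div_comm, mul_comm q p, mul_mul_mul_comm, mul_comm (t * t),
      div_mul_cancel_left₀ (mul_ne_zero hp hq), NNReal.sqrt_inv, NNReal.sqrt_mul_self,
      inv_mul_cancel₀ ht]
  · rw [mul_pow, mul_pow, NNReal.sq_sqrt, NNReal.sq_sqrt]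
    field_simp
    norm_num

theorem volume_lt_hsNorm_le [CompleteSpace H] {L : H →L[ℂ] H}
    (hL : ∀ x, (⟪x, L x⟫_ℂ).im ≤ 0) (hreal : ∀ᵐ x : ℝ, (x : ℂ) ∈ resolventSet ℂ L)
    (S T : H →L[ℂ] H) {t : ℝ} (ht : 0 < t) :
    volume {x : ℝ | ENNReal.ofReal t < hsNorm b (S ∘L resolvent L (x : ℂ) ∘L T)} ≤
      ENNReal.ofReal (16 * π / t) * (hsNorm b S * hsNorm b T) := by
  rcases eq_or_ne (hsNorm b S) 0 with hS₀ | hS₀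
  · simp [eq_zero_of_hsNorm_eq_zero b hS₀, hsNorm]
  rcases eq_or_ne (hsNorm b T) 0 with hT₀ | hT₀
  · simp [eq_zero_of_hsNorm_eq_zero b hT₀, hsNorm]
  rcases eq_or_ne (hsNorm b S * hsNorm b T) ∞ with hST | hST
  · simp [hST, pi_pos, ht]
  have hS : hsNorm b S ≠ ∞ := fun h ↦ hST (by rw [h, ENNReal.top_mul hT₀])
  have hT : hsNorm b T ≠ ∞ := fun h ↦ hST (by rw [h, ENNReal.mul_top hS₀])
  lift t to ℝ≥0 using ht.le
  obtain ⟨p, hp⟩ : ∃ p : ℝ≥0, ↑p = hsNorm b S := ⟨_, ENNReal.coe_toNNReal hS⟩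
  obtain ⟨q, hq⟩ : ∃ q : ℝ≥0, ↑q = hsNorm b T := ⟨_, ENNReal.coe_toNNReal hT⟩
  rw [← hp, ENNReal.coe_ne_zero] at hS₀
  rw [← hq, ENNReal.coe_ne_zero] at hT₀
  have ht₀ : t ≠ 0 := NNReal.coe_ne_zero.1 ht.ne'
  obtain ⟨a, c, hact, hsum⟩ := exists_mul_mul_eq_one_and_sq_add_sq_eq hS₀ hT₀ ht₀
  calc volume {x : ℝ | ENNReal.ofReal t < hsNorm b (S ∘L resolvent L (x : ℂ) ∘L T)}
      ≤ ENNReal.ofReal (8 * π) * ((a * p) ^ 2 + (c * q) ^ 2) := by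
        simpa [hp, hq] using volume_lt_hsNorm_le_of_mul_eq_one b hL hreal S T hact
    _ = ENNReal.ofReal (8 * π) * (2 * (p * q) / t : ℝ≥0) := by
        rw [← hsum, ENNReal.coe_add, ENNReal.coe_pow, ENNReal.coe_pow, ENNReal.coe_mul,
          ENNReal.coe_mul]
    _ = ENNReal.ofReal (16 * π / t) * (p * q) := by
        rw [← ENNReal.coe_mul, ← ENNReal.ofReal_coe_nnreal, ← ENNReal.ofReal_coe_nnreal,
          ← ENNReal.ofReal_mul (by positivity), ← ENNReal.ofReal_mul (by positivity)]
        congr 1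
        push_cast
        ring
    _ = ENNReal.ofReal (16 * π / t) * (hsNorm b S * hsNorm b T) := by rw [hp, hq]

end WeakBound

theorem weak_one_one_bound_dissipative_general {H ι : Type*} [NormedAddCommGroup H]
    [InnerProductSpace ℂ H] [CompleteSpace H] (b : HilbertBasis ι ℂ H) {A : H →L[ℂ] H}
    (hA : ∀ x : H, 0 ≤ (⟪x, A x⟫_ℂ).im)
    (hunit : ∀ᵐ η : ℝ, IsUnit ((η : ℂ) • (1 : H →L[ℂ] H) + A)) (S T : H →L[ℂ] H)
    {t : ℝ} (ht : 0 < t) :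
    volume {η : ℝ |
        ENNReal.ofReal t <
          hsNorm b (S ∘L Ring.inverse ((η : ℂ) • (1 : H →L[ℂ] H) + A) ∘L T)} ≤
      ENNReal.ofReal (16 * π / t) * (hsNorm b S * hsNorm b T) := by
  have hneg (z : ℂ) : algebraMap ℂ (H →L[ℂ] H) z - -A = z • 1 + A := by
    rw [Algebra.algebraMap_eq_smul_one, sub_neg_eq_add]
  have hbound := volume_lt_hsNorm_le b (L := -A) (fun x ↦ by simpa using hA x)
    (hunit.mono fun η hη ↦ by rwa [spectrum.mem_resolventSet_iff, hneg]) S T ht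
  simpa only [resolvent, hneg] using hbound

/-- weak 1-1 bound of Naboko. There is a universal constant `C > 0` such
that for every Hilbert space, every bounded dissipative operator `A` (i.e. `Im A ≥ 0`)
with `A + η` invertible for a.e. real `η`, and every Hilbert–Schmidt operator `T`, the
Lebesgue measure of `{η ∈ ℝ : ‖T (η + A)⁻¹ T‖_HS > t}` is at most `(C/t)·‖T‖_HS²`. -/
theorem weak_one_one_bound_dissipative :
    ∃ C : ℝ, 0 < C ∧
      ∀ (H : Type) [NormedAddCommGroup H] [InnerProductSpace ℂ H] [CompleteSpace H]
        (ι : Type) (b : HilbertBasis ι ℂ H) (A T : H →L[ℂ] H),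
        (∀ x : H, 0 ≤ (⟪x, A x⟫_ℂ).im) →
        (∀ᵐ η : ℝ, IsUnit ((η : ℂ) • (1 : H →L[ℂ] H) + A)) →
        hsNorm b T < ∞ →
        ∀ t : ℝ, 0 < t →
          volume {η : ℝ |
              ENNReal.ofReal t <
                hsNorm b (T ∘L Ring.inverse ((η : ℂ) • (1 : H →L[ℂ] H) + A) ∘L T)} ≤
            ENNReal.ofReal (C / t) * (hsNorm b T) ^ 2 := by
  refine ⟨16 * π, by positivity, fun H _ _ _ ι b A T hA hunit _ t ht ↦ ?_⟩
  simpa only [sq] using weak_one_one_bound_dissipative_general b hA hunit T T ht
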